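/- arXiv:2405.10894 — 7 statements merged into one kernel-verified Lean document; each statement's English description precedes it below -/
import Mathlib

section
/- Let k ≥ 1 be a natural number and let C be a class of finite simple graphs that is (k+1)-well-quasi-ordered by the labelled induced-subgraph relation. Then the hereditary closure of C (the class of all induced subgraphs of members of C) is k-well-quasi-ordered by the labelled induced-subgraph relation. -/
/-- A finite simple undirected graph, with vertex set `Fin n`. -/
structure FinGraph where
  n : ℕ
  adj : Fin n → Fin n → Prop
  symm : ∀ u v, adj u v → adj v u
  irrefl : ∀ u, ¬ adj u u

/-- A label-preserving induced-subgraph embedding between two `X`-labelled graphs,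
where labels are related by `le`: an injective map on vertices such that
`{h u, h v}` is an edge of `H` iff `{u,v}` is an edge of `G`, and labels are related. -/
def FinGraph.LEmb {X : Type} (le : X → X → Prop) (G H : FinGraph)
    (lG : Fin G.n → X) (lH : Fin H.n → X) : Prop :=
  ∃ h : Fin G.n → Fin H.n, Function.Injective h ∧
    (∀ u v, H.adj (h u) (h v) ↔ G.adj u v) ∧ (∀ u, le (lG u) (lH (h u)))

/-- A class `C` of graphs is `k`-well-quasi-ordered if for every set `X` with at most
`k` elements (ordered by equality), every infinite sequence of `X`-labelled graphs with
underlying graph in `C` contains `i < j` with a label-preserving embedding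
of the `i`-th into the `j`-th. -/
def FinGraph.kWQO (C : Set FinGraph) (k : ℕ) : Prop :=
  ∀ (X : Type) (_ : Fintype X), Fintype.card X ≤ k →
    ∀ (G : ℕ → FinGraph), (∀ i, G i ∈ C) →
      ∀ l : (i : ℕ) → Fin (G i).n → X,
        ∃ i j, i < j ∧ FinGraph.LEmb (· = ·) (G i) (G j) (l i) (l j)

/-- The hereditary closure of a class `C`: all induced subgraphs of members of `C`. -/
def FinGraph.hereditaryClosure (C : Set FinGraph) : Set FinGraph :=
  {G | ∃ H ∈ C, ∃ h : Fin G.n → Fin H.n, Function.Injective h ∧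
    ∀ u v, H.adj (h u) (h v) ↔ G.adj u v}

/-!
Label a graph of the hereditary closure, pick a member of the class containing it as an induced
subgraph, and give all the extra vertices one fresh label. An embedding between two such extended
graphs sends the original vertices to vertices not carrying the fresh label, that is, to original
vertices, so it restricts to an embedding of the graphs one started from.
-/

theorem option_rel_eq {α : Type*} : Option.Rel (α := α) (· = ·) = (· = ·) := by
  funext o p
  cases o <;> cases p <;> simp

theorem exists_relEmbedding_comp_eq_of_range_subset {α β γ : Type*} {r : α → α → Prop}
    {s : β → β → Prop} {t : γ → γ → Prop} (f : r ↪r t) (g : s ↪r t)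
    (hfg : Set.range f ⊆ Set.range g) : ∃ φ : r ↪r s, ⇑g ∘ φ = f := by
  obtain ⟨φ, hφ⟩ := Set.range_subset_range_iff_exists_comp.1 hfg
  have map_φ (a : α) : g (φ a) = f a := (congrFun hφ a).symm
  have φ_injective : Function.Injective φ := .of_comp (f := g) (hφ ▸ f.injective)
  have φ_rel (a b : α) : s (φ a) (φ b) ↔ r a b := by
    rw [← g.map_rel_iff, map_φ, map_φ, f.map_rel_iff]
  exact ⟨⟨⟨φ, φ_injective⟩, φ_rel _ _⟩, hφ.symm⟩

/-- The labelling of `β` that carries a labelling `l` of `α` along `e : α → β` and gives the fresh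
label `none` to everything outside the range of `e`. It is meant for injective `e`: otherwise a
point of the range gets the label of an arbitrary preimage. -/
noncomputable def extendLabel {α β X : Type*} (e : α → β) (l : α → X) : β → Option X :=
  Function.extend e (some ∘ l) fun _ => none

section extendLabel

variable {α β X Y : Type*} {e : α → β} (he : Function.Injective e) {l : α → X}
include he

theorem extendLabel_apply (a : α) : extendLabel e l (e a) = some (l a) :=
  he.extend_apply ..

theorem rel_some_extendLabel_iff {r : Y → X → Prop} {y : Y} {b : β} :
    Option.Rel r (some y) (extendLabel e l b) ↔ ∃ a, e a = b ∧ r y (l a) := by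
  constructor
  · intro hy
    obtain ⟨a, rfl⟩ : ∃ a, e a = b := by
      by_contra hb
      rw [extendLabel, Function.extend_apply' _ _ _ hb] at hy
      exact Option.not_rel_some_none hy
    rw [extendLabel_apply he, Option.rel_some_some] at hy
    exact ⟨a, rfl, hy⟩
  · rintro ⟨a, rfl, hy⟩
    rwa [extendLabel_apply he, Option.rel_some_some]

end extendLabel

namespace FinGraph

theorem lEmb_iff_exists_relEmbedding {X : Type} {le : X → X → Prop} {G H : FinGraph}
    {lG : Fin G.n → X} {lH : Fin H.n → X} :
    LEmb le G H lG lH ↔ ∃ f : G.adj ↪r H.adj, ∀ u, le (lG u) (lH (f u)) :=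
  ⟨fun ⟨f, hf, hadj, hl⟩ => ⟨⟨⟨f, hf⟩, hadj _ _⟩, hl⟩,
    fun ⟨f, hl⟩ => ⟨f, f.injective, fun _ _ => f.map_rel_iff, hl⟩⟩

theorem mem_hereditaryClosure_iff {C : Set FinGraph} {G : FinGraph} :
    G ∈ hereditaryClosure C ↔ ∃ H ∈ C, Nonempty (G.adj ↪r H.adj) :=
  ⟨fun ⟨H, hH, f, hf, hadj⟩ => ⟨H, hH, ⟨⟨⟨f, hf⟩, hadj _ _⟩⟩⟩,
    fun ⟨H, hH, ⟨f⟩⟩ => ⟨H, hH, f, f.injective, fun _ _ => f.map_rel_iff⟩⟩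

theorem LEmb.of_extendLabel {X : Type} {le : X → X → Prop} {G G' H H' : FinGraph}
    {l : Fin G.n → X} {l' : Fin G'.n → X} (e : G.adj ↪r H.adj) (e' : G'.adj ↪r H'.adj)
    (h : LEmb (Option.Rel le) H H' (extendLabel e l) (extendLabel e' l')) :
    LEmb le G G' l l' := by
  obtain ⟨f, hf⟩ := lEmb_iff_exists_relEmbedding.1 h
  have exists_preimage (u : Fin G.n) : ∃ w, e' w = f (e u) ∧ le (l u) (l' w) := by
    have hu := hf (e u)
    rwa [extendLabel_apply e.injective, rel_some_extendLabel_iff e'.injective] at hu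
  have range_subset : Set.range (e.trans f) ⊆ Set.range e' := by
    rintro _ ⟨u, rfl⟩
    exact (exists_preimage u).imp fun _ => And.left
  obtain ⟨φ, hφ⟩ := exists_relEmbedding_comp_eq_of_range_subset (e.trans f) e' range_subset
  refine lEmb_iff_exists_relEmbedding.2 ⟨φ, fun u => ?_⟩
  obtain ⟨w, hw, hle⟩ := exists_preimage u
  rwa [e'.injective ((congrFun hφ u).trans hw.symm)]

/-- The class of graphs from `C` with vertices labelled from `X` is well-quasi-ordered by labelled
embedding. Here `X` may be infinite and `le` is any relation on it; a labelled graph is encoded as a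
dependent pair. -/
def LabelledWQO {X : Type} (C : Set FinGraph) (le : X → X → Prop) : Prop :=
  {P : Σ G : FinGraph, Fin G.n → X | P.1 ∈ C}.PartiallyWellOrderedOn
    fun P Q => LEmb le P.1 Q.1 P.2 Q.2

theorem kWQO_iff_labelledWQO {C : Set FinGraph} {k : ℕ} :
    kWQO C k ↔ ∀ (X : Type) [Fintype X], Fintype.card X ≤ k →
      LabelledWQO C fun x y : X => x = y :=
  ⟨fun h X _ hX => Set.partiallyWellOrderedOn_iff_exists_lt.2 fun P hP =>
      h X inferInstance hX (fun i => (P i).1) hP fun i => (P i).2,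
    fun h X _ hX G hG l => (h X hX).exists_lt (f := fun i => ⟨G i, l i⟩) hG⟩

end FinGraph

theorem stmt0_general {X : Type} {C : Set FinGraph} {le : X → X → Prop}
    (h : FinGraph.LabelledWQO C (Option.Rel le)) :
    FinGraph.LabelledWQO (FinGraph.hereditaryClosure C) le := by
  refine Set.partiallyWellOrderedOn_iff_exists_lt.2 fun P hP => ?_
  choose H hH he using fun i => FinGraph.mem_hereditaryClosure_iff.1 (hP i)
  let e i := (he i).some
  obtain ⟨i, j, hij, hemb⟩ := h.exists_lt (f := fun i => ⟨H i, extendLabel (e i) (P i).2⟩) hH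
  exact ⟨i, j, hij, hemb.of_extendLabel (e i) (e j)⟩

/-- Hereditary Closure Lemma: let `k ≥ 1` and let `C` be a class of finite simple
graphs that is `(k+1)`-well-quasi-ordered by the labelled induced-subgraph relation.
Then the hereditary closure of `C` is `k`-well-quasi-ordered. -/
theorem stmt0 (C : Set FinGraph) (k : ℕ) (hk : 1 ≤ k)
    (h : FinGraph.kWQO C (k + 1)) :
    FinGraph.kWQO (FinGraph.hereditaryClosure C) k := by
  refine FinGraph.kWQO_iff_labelledWQO.2 fun X _ hX => stmt0_general ?_
  simpa only [option_rel_eq] using FinGraph.kWQO_iff_labelledWQO.1 h (Option X) (by simpa using hX)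
end

section
/- Let M be a finite monoid. The following are equivalent: (1) the relation defined by x ≤ y iff xM ⊆ (xy)M is total on M (for all x,y, x ≤ y or y ≤ x); (2) the relation defined by x ≤ y iff Mx ⊆ M(yx) is total on M; (3) the relation defined by x ≤ y iff MxM = M(xy)M = M(yx)M is total on M; (4) the bilateral ideals of M are totally ordered by inclusion and M(xy)M = MxM ∩ MyM for all x,y ∈ M. -/
/-- The right ideal `mM = {m·y : y ∈ M}` of an element `m` of a monoid `M`. -/
def rIdeal (M : Type) [Monoid M] (m : M) : Set M := {z | ∃ y : M, z = m * y}

/-- The left ideal `Mm = {x·m : x ∈ M}` of an element `m` of a monoid `M`. -/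
def lIdeal (M : Type) [Monoid M] (m : M) : Set M := {z | ∃ x : M, z = x * m}

/-- The bilateral ideal `MmM = {x·m·y : x,y ∈ M}` of an element `m` of a monoid `M`. -/
def bIdeal (M : Type) [Monoid M] (m : M) : Set M := {z | ∃ x y : M, z = x * m * y}

/-!
Conditions (1), (2) and (3) each relate `x` to `y` only if `x` generates the same bilateral ideal as
`xy` or as `yx`. Taking `y = x` in a total such relation gives `MxM = Mx²M` for every `x`, so
`M(xy)M = M(xyxy)M ⊆ M(yx)M`. If `z = axb = cyd`, then `z² = c(ydax)b`, whence
`z ∈ M(ydax)M ⊆ M(xyda)M ⊆ M(xy)M`; this is (4).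

Conversely (4) says that `MxM = M(xy)M = M(yx)M` whenever `MxM ⊆ MyM`. In a finite monoid these
equalities of bilateral ideals descend to one-sided ideals: from `x = axc` one gets `x = aⁿxcⁿ`, and
the powers of `c` repeat, so that `x ∈ xcM`. Monoids with this descent property are called stable.
-/

section PrincipalIdeals

variable {M : Type} [Monoid M] {x y z : M}

theorem rIdeal_subset_iff : rIdeal M x ⊆ rIdeal M z ↔ x ∈ rIdeal M z := by
  refine ⟨fun h => h ⟨1, (mul_one x).symm⟩, ?_⟩
  rintro ⟨b, rfl⟩ _ ⟨d, rfl⟩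
  exact ⟨b * d, mul_assoc z b d⟩

theorem lIdeal_subset_iff : lIdeal M x ⊆ lIdeal M z ↔ x ∈ lIdeal M z := by
  refine ⟨fun h => h ⟨1, (one_mul x).symm⟩, ?_⟩
  rintro ⟨a, rfl⟩ _ ⟨c, rfl⟩
  exact ⟨c * a, (mul_assoc c a z).symm⟩

theorem bIdeal_subset_iff : bIdeal M x ⊆ bIdeal M z ↔ x ∈ bIdeal M z := by
  refine ⟨fun h => h ⟨1, 1, by simp⟩, ?_⟩
  rintro ⟨a, b, rfl⟩ _ ⟨c, d, rfl⟩
  exact ⟨c * a, b * d, by simp only [mul_assoc]⟩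

theorem bIdeal_subset_of_rIdeal_subset (h : rIdeal M x ⊆ rIdeal M z) :
    bIdeal M x ⊆ bIdeal M z := by
  obtain ⟨b, rfl⟩ := rIdeal_subset_iff.1 h
  exact bIdeal_subset_iff.2 ⟨1, b, by rw [one_mul]⟩

theorem bIdeal_subset_of_lIdeal_subset (h : lIdeal M x ⊆ lIdeal M z) :
    bIdeal M x ⊆ bIdeal M z := by
  obtain ⟨a, rfl⟩ := lIdeal_subset_iff.1 h
  exact bIdeal_subset_iff.2 ⟨a, 1, by rw [mul_one]⟩

theorem bIdeal_mul_subset_left (x y : M) : bIdeal M (x * y) ⊆ bIdeal M x :=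
  bIdeal_subset_of_rIdeal_subset (rIdeal_subset_iff.2 ⟨y, rfl⟩)

theorem bIdeal_mul_subset_right (x y : M) : bIdeal M (x * y) ⊆ bIdeal M y :=
  bIdeal_subset_of_lIdeal_subset (lIdeal_subset_iff.2 ⟨x, rfl⟩)

theorem bIdeal_eq_mul_of_subset (hmul : ∀ x y : M, bIdeal M (x * y) = bIdeal M x ∩ bIdeal M y)
    (hxy : bIdeal M x ⊆ bIdeal M y) :
    bIdeal M x = bIdeal M (x * y) ∧ bIdeal M x = bIdeal M (y * x) := by
  rw [hmul, hmul, Set.inter_eq_left.2 hxy, Set.inter_eq_right.2 hxy]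
  exact ⟨rfl, rfl⟩

end PrincipalIdeals

/-- A monoid is intra-regular if `x ∈ Mx²M`, i.e. `MxM = Mx²M`, for every `x`. This is all that a
total relation as in (1), (2) or (3) says about a single element. -/
def IsIntraRegular (M : Type) [Monoid M] : Prop := ∀ x : M, x ∈ bIdeal M (x * x)

namespace IsIntraRegular

variable {M : Type} [Monoid M]

theorem bIdeal_mul_subset_swap (hM : IsIntraRegular M) (x y : M) :
    bIdeal M (x * y) ⊆ bIdeal M (y * x) := calc
  bIdeal M (x * y) ⊆ bIdeal M (x * y * (x * y)) := bIdeal_subset_iff.2 (hM (x * y))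
  _ ⊆ bIdeal M (y * x) := bIdeal_subset_iff.2 ⟨x, y, by simp only [mul_assoc]⟩

theorem bIdeal_mul (hM : IsIntraRegular M) (x y : M) :
    bIdeal M (x * y) = bIdeal M x ∩ bIdeal M y := by
  refine (Set.subset_inter (bIdeal_mul_subset_left x y) (bIdeal_mul_subset_right x y)).antisymm ?_
  rintro z ⟨⟨a, b, hx⟩, ⟨c, d, hy⟩⟩
  have z_sq : z * z ∈ bIdeal M (y * d * a * x) :=
    ⟨c, b, by nth_rw 1 [hy, hx]; simp only [mul_assoc]⟩
  have swap : bIdeal M (y * d * a * x) ⊆ bIdeal M (x * y) := calc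
    bIdeal M (y * d * a * x) ⊆ bIdeal M (x * (y * d * a)) := hM.bIdeal_mul_subset_swap _ x
    _ = bIdeal M (x * y * (d * a)) := by simp only [mul_assoc]
    _ ⊆ bIdeal M (x * y) := bIdeal_mul_subset_left _ _
  exact swap (bIdeal_subset_iff.2 z_sq (hM z))

end IsIntraRegular

theorem bIdeal_total_and_mul_of_total {M : Type} [Monoid M] {r : M → M → Prop}
    (total : ∀ x y, r x y ∨ r y x)
    (hr : ∀ x y, r x y → bIdeal M x ⊆ bIdeal M (x * y) ∨ bIdeal M x ⊆ bIdeal M (y * x)) :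
    (∀ x y : M, bIdeal M x ⊆ bIdeal M y ∨ bIdeal M y ⊆ bIdeal M x) ∧
      (∀ x y : M, bIdeal M (x * y) = bIdeal M x ∩ bIdeal M y) := by
  have subset_of_rel : ∀ x y, r x y → bIdeal M x ⊆ bIdeal M y := fun x y h =>
    (hr x y h).elim (·.trans (bIdeal_mul_subset_right x y)) (·.trans (bIdeal_mul_subset_left y x))
  have intraRegular : IsIntraRegular M := fun x =>
    bIdeal_subset_iff.1 (or_self_iff.1 (hr x x (or_self_iff.1 (total x x))))
  exact ⟨fun x y => (total x y).imp (subset_of_rel x y) (subset_of_rel y x),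
    intraRegular.bIdeal_mul⟩

section Powers

variable {M : Type*} [Monoid M] {a x c d : M}

theorem eq_pow_mul_mul_pow (h : x = a * x * c) (n : ℕ) : x = a ^ n * x * c ^ n := by
  induction n with
  | zero => simp
  | succ n ih =>
    calc x = a ^ n * x * c ^ n := ih
      _ = a ^ n * (a * x * c) * c ^ n := by rw [← h]
      _ = a ^ (n + 1) * x * c ^ (n + 1) := by rw [pow_succ, pow_succ']; simp only [mul_assoc]

theorem eq_mul_mul_of_pow_eq_pow_succ_mul {n : ℕ} (h : x = a * x * c)
    (hc : c ^ n = c ^ (n + 1) * d) : x = x * c * d := calc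
  x = a ^ n * x * c ^ n := eq_pow_mul_mul_pow h n
  _ = a ^ n * x * (c ^ (n + 1) * d) := by rw [hc]
  _ = a ^ n * x * c ^ n * c * d := by rw [pow_succ]; simp only [mul_assoc]
  _ = x * c * d := by rw [← eq_pow_mul_mul_pow h n]

theorem eq_mul_mul_of_pow_eq_mul_pow_succ {n : ℕ} (h : x = a * x * c)
    (ha : a ^ n = d * a ^ (n + 1)) : x = d * a * x := calc
  x = a ^ n * x * c ^ n := eq_pow_mul_mul_pow h n
  _ = d * a ^ (n + 1) * x * c ^ n := by rw [ha]
  _ = d * a * (a ^ n * x * c ^ n) := by rw [pow_succ']; simp only [mul_assoc]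
  _ = d * a * x := by rw [← eq_pow_mul_mul_pow h n]

theorem exists_pow_eq_pow_add_succ [Finite M] (c : M) : ∃ n k : ℕ, c ^ n = c ^ (n + k + 1) := by
  obtain ⟨n, m, hlt, heq⟩ :=
    Set.finite_univ.exists_lt_map_eq_of_forall_mem (f := (c ^ · : ℕ → M)) fun _ => Set.mem_univ _
  obtain ⟨k, rfl⟩ := Nat.exists_eq_add_of_lt hlt
  exact ⟨n, k, heq⟩

end Powers

/-- A monoid is stable if right (left) multiplication can only preserve the bilateral ideal of an
element when it preserves its right (left) ideal. The reverse inclusions always hold, so only one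
inclusion is required of each pair of ideals. -/
class IsStableMonoid (M : Type) [Monoid M] : Prop where
  rIdeal_subset_mul {x y : M} : bIdeal M x ⊆ bIdeal M (x * y) → rIdeal M x ⊆ rIdeal M (x * y)
  lIdeal_subset_mul {x y : M} : bIdeal M x ⊆ bIdeal M (y * x) → lIdeal M x ⊆ lIdeal M (y * x)

theorem IsStableMonoid.of_pow_mem {M : Type} [Monoid M]
    (hr : ∀ c : M, ∃ n : ℕ, c ^ n ∈ rIdeal M (c ^ (n + 1)))
    (hl : ∀ c : M, ∃ n : ℕ, c ^ n ∈ lIdeal M (c ^ (n + 1))) : IsStableMonoid M where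
  rIdeal_subset_mul {x y} h := by
    obtain ⟨a, b, hx⟩ := bIdeal_subset_iff.1 h
    obtain ⟨n, d, hd⟩ := hr (y * b)
    have x_eq : x = a * x * (y * b) := by simpa only [mul_assoc] using hx
    refine rIdeal_subset_iff.2 ⟨b * d, ?_⟩
    simpa only [mul_assoc] using eq_mul_mul_of_pow_eq_pow_succ_mul x_eq hd
  lIdeal_subset_mul {x y} h := by
    obtain ⟨a, b, hx⟩ := bIdeal_subset_iff.1 h
    obtain ⟨n, d, hd⟩ := hl (a * y)
    have x_eq : x = a * y * x * b := by simpa only [mul_assoc] using hx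
    refine lIdeal_subset_iff.2 ⟨d * a, ?_⟩
    simpa only [mul_assoc] using eq_mul_mul_of_pow_eq_mul_pow_succ x_eq hd

instance IsStableMonoid.of_finite {M : Type} [Monoid M] [Finite M] : IsStableMonoid M := by
  refine .of_pow_mem (fun c => ?_) (fun c => ?_)
  all_goals
    obtain ⟨n, k, h⟩ := exists_pow_eq_pow_add_succ c
    exact ⟨n, c ^ k, by rw [h, ← pow_add]; congr 1; omega⟩

theorem stmt1_general (M : Type) [Monoid M] [IsStableMonoid M] :
    List.TFAE [
      ∀ x y : M, rIdeal M x ⊆ rIdeal M (x * y) ∨ rIdeal M y ⊆ rIdeal M (y * x),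
      ∀ x y : M, lIdeal M x ⊆ lIdeal M (y * x) ∨ lIdeal M y ⊆ lIdeal M (x * y),
      ∀ x y : M, (bIdeal M x = bIdeal M (x * y) ∧ bIdeal M x = bIdeal M (y * x)) ∨
                 (bIdeal M y = bIdeal M (y * x) ∧ bIdeal M y = bIdeal M (x * y)),
      (∀ x y : M, bIdeal M x ⊆ bIdeal M y ∨ bIdeal M y ⊆ bIdeal M x) ∧
        (∀ x y : M, bIdeal M (x * y) = bIdeal M x ∩ bIdeal M y)
    ] := by
  tfae_have 1 → 4 := fun total =>
    bIdeal_total_and_mul_of_total total fun _ _ h => .inl (bIdeal_subset_of_rIdeal_subset h)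
  tfae_have 2 → 4 := fun total =>
    bIdeal_total_and_mul_of_total total fun _ _ h => .inr (bIdeal_subset_of_lIdeal_subset h)
  tfae_have 3 → 4 := fun total =>
    bIdeal_total_and_mul_of_total total fun _ _ h => .inl h.1.subset
  tfae_have 4 → 3 := fun ⟨total, hmul⟩ x y =>
    (total x y).imp (bIdeal_eq_mul_of_subset hmul) (bIdeal_eq_mul_of_subset hmul)
  tfae_have 3 → 1 := fun total x y =>
    (total x y).imp (fun h => IsStableMonoid.rIdeal_subset_mul h.1.subset)
      (fun h => IsStableMonoid.rIdeal_subset_mul h.1.subset)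
  tfae_have 3 → 2 := fun total x y =>
    (total x y).imp (fun h => IsStableMonoid.lIdeal_subset_mul h.2.subset)
      (fun h => IsStableMonoid.lIdeal_subset_mul h.2.subset)
  tfae_finish

/-- Let `M` be a finite monoid. The following are equivalent:
(1) the relation `x ≤ y ↔ xM ⊆ (xy)M` is total on `M`;
(2) the relation `x ≤ y ↔ Mx ⊆ M(yx)` is total on `M`;
(3) the relation `x ≤ y ↔ MxM = M(xy)M = M(yx)M` is total on `M`;
(4) the bilateral ideals of `M` are totally ordered by inclusion and
    `M(xy)M = MxM ∩ MyM` for all `x,y ∈ M`. -/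
theorem stmt1 (M : Type) [Monoid M] [Fintype M] :
    List.TFAE [
      ∀ x y : M, rIdeal M x ⊆ rIdeal M (x * y) ∨ rIdeal M y ⊆ rIdeal M (y * x),
      ∀ x y : M, lIdeal M x ⊆ lIdeal M (y * x) ∨ lIdeal M y ⊆ lIdeal M (x * y),
      ∀ x y : M, (bIdeal M x = bIdeal M (x * y) ∧ bIdeal M x = bIdeal M (y * x)) ∨
                 (bIdeal M y = bIdeal M (y * x) ∧ bIdeal M y = bIdeal M (x * y)),
      (∀ x y : M, bIdeal M x ⊆ bIdeal M y ∨ bIdeal M y ⊆ bIdeal M x) ∧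
        (∀ x y : M, bIdeal M (x * y) = bIdeal M x ∩ bIdeal M y)
    ] :=
  stmt1_general M
end

section
/- Let M be a finite totally ordered monoid. For all a,b,c ∈ M with MbM ⊆ MaM: if a·b·c = a·b then b·c = b; and if c·b·a = b·a then c·b = b. -/
/-!
If `b = z * (a * b)` for some `z`, then `a * b * c = a * b` gives `b * c = z * (a * b * c) = b`.
Total order together with `MbM ⊆ MaM` only gives `b = x * (a * b) * y`. Iterating this equation
yields `b = (x * a) ^ n * b * y ^ n` for all `n`, and since the powers of `x * a` are eventually
periodic, the factor `y` can be removed at the cost of replacing `x` by `(x * a) ^ p * x`.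
-/

open MulOpposite

section Monoid

variable {M : Type*} [Monoid M] {a b c u v : M}

/-- Green's preorder `b ≤_𝒥 a`, that is `MbM ⊆ MaM`, in terms of elements: `b ∈ MaM`. Unlike
`bIdeal`, it is defined in every universe. -/
def JLE (b a : M) : Prop := ∃ x y : M, b = x * a * y

theorem JLE.refl (a : M) : JLE a a := ⟨1, 1, by simp⟩

theorem JLE.trans : JLE c b → JLE b a → JLE c a := by
  rintro ⟨x, y, rfl⟩ ⟨x', y', rfl⟩
  exact ⟨x * x', y' * y, by simp only [mul_assoc]⟩

theorem pow_mul_mul_pow_eq_self (h : u * b * v = b) (n : ℕ) : u ^ n * b * v ^ n = b := by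
  induction n with
  | zero => simp
  | succ n ih =>
    calc u ^ (n + 1) * b * v ^ (n + 1) = u ^ n * (u * b * v) * v ^ n := by
          simp only [pow_succ u, pow_succ' v, mul_assoc]
      _ = b := by rw [h, ih]

theorem pow_mul_eq_self_of_mul_mul_eq_self {m p : ℕ} (hu : u ^ (p + m) = u ^ m)
    (h : u * b * v = b) : u ^ p * b = b := by
  have hm : u ^ m * b * v ^ m = b := pow_mul_mul_pow_eq_self h m
  calc u ^ p * b = u ^ p * (u ^ m * b * v ^ m) := by rw [hm]
    _ = u ^ (p + m) * b * v ^ m := by simp only [pow_add, mul_assoc]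
    _ = b := by rw [hu, hm]

theorem mul_pow_eq_self_of_mul_mul_eq_self {m p : ℕ} (hv : v ^ (p + m) = v ^ m)
    (h : u * b * v = b) : b * v ^ p = b := by
  have h_op : op v * op b * op u = op b := by simp only [← op_mul, ← mul_assoc, h]
  have hv_op : op v ^ (p + m) = op v ^ m := by simp only [← op_pow, hv]
  exact op_injective (pow_mul_eq_self_of_mul_mul_eq_self hv_op h_op)

theorem exists_pow_succ_add_eq_pow (hu : ¬ Function.Injective fun n : ℕ ↦ u ^ n) :
    ∃ m p : ℕ, u ^ (p + 1 + m) = u ^ m := by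
  obtain ⟨m, n, hmn, hlt⟩ : ∃ m n : ℕ, u ^ m = u ^ n ∧ m < n := by
    obtain ⟨m, n, hmn, hne⟩ := Function.not_injective_iff.1 hu
    rcases hne.lt_or_gt with hlt | hlt
    exacts [⟨m, n, hmn, hlt⟩, ⟨n, m, hmn.symm, hlt⟩]
  obtain ⟨p, rfl⟩ := Nat.exists_eq_add_of_lt hlt
  exact ⟨m, p, by rw [hmn, add_comm, add_assoc]⟩

variable (M) in
/-- Stability of a monoid in the sense of Green's relations: `a * b 𝒥 b` implies `a * b ℒ b`, and
`b * a 𝒥 b` implies `b * a ℛ b`. Only the nontrivial half of each relation is recorded, since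
`a * b` and `b * a` always lie below `b`. -/
structure IsStableMonoid_s3 : Prop where
  exists_mul_left_eq : ∀ {a b : M}, JLE b (a * b) → ∃ z, z * (a * b) = b
  exists_mul_right_eq : ∀ {a b : M}, JLE b (b * a) → ∃ z, b * a * z = b

theorem isStableMonoid_of_not_injective_pow
    (hM : ∀ u : M, ¬ Function.Injective fun n : ℕ ↦ u ^ n) : IsStableMonoid_s3 M where
  exists_mul_left_eq := by
    rintro a b ⟨x, y, hb⟩
    obtain ⟨m, p, hp⟩ := exists_pow_succ_add_eq_pow (hM (x * a))
    have hfix : x * a * b * y = b := by rw [mul_assoc x, ← hb]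
    have hpow : (x * a) ^ (p + 1) * b = b := pow_mul_eq_self_of_mul_mul_eq_self hp hfix
    exact ⟨(x * a) ^ p * x, by simpa only [pow_succ, mul_assoc] using hpow⟩
  exists_mul_right_eq := by
    rintro a b ⟨x, y, hb⟩
    obtain ⟨m, p, hp⟩ := exists_pow_succ_add_eq_pow (hM (a * y))
    have hfix : x * b * (a * y) = b := by simpa only [mul_assoc] using hb.symm
    have hpow : b * (a * y) ^ (p + 1) = b := mul_pow_eq_self_of_mul_mul_eq_self hp hfix
    exact ⟨y * (a * y) ^ p, by simpa only [pow_succ', mul_assoc] using hpow⟩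

theorem isStableMonoid_of_finite [Finite M] : IsStableMonoid_s3 M :=
  isStableMonoid_of_not_injective_pow fun _ ↦ not_injective_infinite_finite _

theorem IsStableMonoid_s3.mul_eq_left_of_mul_mul_eq (hM : IsStableMonoid_s3 M) (hb : JLE b (a * b))
    (h : a * b * c = a * b) : b * c = b := by
  obtain ⟨z, hz⟩ := hM.exists_mul_left_eq hb
  calc b * c = z * (a * b * c) := by rw [← mul_assoc z, hz]
    _ = b := by rw [h, hz]

theorem IsStableMonoid_s3.mul_eq_right_of_mul_mul_eq (hM : IsStableMonoid_s3 M) (hb : JLE b (b * a))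
    (h : c * b * a = b * a) : c * b = b := by
  obtain ⟨z, hz⟩ := hM.exists_mul_right_eq hb
  calc c * b = c * b * a * z := by rw [mul_assoc c, mul_assoc c, hz]
    _ = b := by rw [h, hz]

-- `JLE (a * b) a` always holds, so `JLE a (a * b)` says that `M(ab)M = MaM`.
theorem stmt3_general (hM : IsStableMonoid_s3 M) (hord : ∀ a b : M, JLE a (a * b) ∨ JLE b (a * b))
    (hba : JLE b a) :
    (a * b * c = a * b → b * c = b) ∧ (c * b * a = b * a → c * b = b) :=
  ⟨hM.mul_eq_left_of_mul_mul_eq ((hord a b).elim hba.trans id),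
    hM.mul_eq_right_of_mul_mul_eq ((hord b a).elim id hba.trans)⟩

end Monoid

theorem bIdeal_subset_bIdeal_iff {M : Type} [Monoid M] {a b : M} :
    bIdeal M b ⊆ bIdeal M a ↔ JLE b a :=
  ⟨fun h ↦ h (JLE.refl b), fun hba _ hz ↦ JLE.trans hz hba⟩

/-- Cancellation property: let `M` be a finite totally ordered monoid
(for all `a,b`, `M(ab)M = MaM` or `M(ab)M = MbM`). For all `a,b,c ∈ M` with
`MbM ⊆ MaM`: if `a·b·c = a·b` then `b·c = b`; and if `c·b·a = b·a` then `c·b = b`. -/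
theorem stmt3 (M : Type) [Monoid M] [Fintype M]
    (hM : ∀ a b : M, bIdeal M (a * b) = bIdeal M a ∨ bIdeal M (a * b) = bIdeal M b)
    (a b c : M) (hba : bIdeal M b ⊆ bIdeal M a) :
    (a * b * c = a * b → b * c = b) ∧ (c * b * a = b * a → c * b = b) := by
  simp only [subset_antisymm_iff, bIdeal_subset_bIdeal_iff] at hM hba
  exact stmt3_general isStableMonoid_of_finite (fun a b ↦ (hM a b).imp And.right And.right) hba
end

section
/- Let M be a finite monoid such that for all x,y ∈ M, either xM ⊆ (xy)M or yM ⊆ (xy)M. Then there exists a natural number k ≥ 2 such that x^k = x for all x ∈ M. -/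
/-!
Taking `y = x`, the hypothesis says that `x * x ∣ x`, where `a ∣ b` means `b ∈ aM`. Multiplying by
`x` on the left and iterating gives `x ^ m ∣ x` for every `m`, say `x = x ^ m * z`. By pigeonhole a
finite monoid satisfies an identity `x ^ (m + n) = x ^ m` with `n > 0`, and multiplying it by `z` on
the right yields `x ^ (n + 1) = x`.
-/

section Monoid

variable {M : Type*} [Monoid M]

theorem pow_dvd_self_of_mul_self_dvd_self {x : M} (h : x * x ∣ x) (n : ℕ) : x ^ n ∣ x := by
  induction n with
  | zero => simp
  | succ n ih =>
    calc x ^ (n + 1) = x * x ^ n := pow_succ' x n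
      _ ∣ x * x := mul_dvd_mul_left x ih
      _ ∣ x := h

theorem pow_succ_eq_self_of_mul_self_dvd_self {x : M} {m n : ℕ} (hdvd : x * x ∣ x)
    (hpow : x ^ (m + n) = x ^ m) : x ^ (n + 1) = x := by
  obtain ⟨z, hz⟩ : x ^ m ∣ x := pow_dvd_self_of_mul_self_dvd_self hdvd m
  calc x ^ (n + 1) = x ^ n * x := pow_succ x n
    _ = x ^ n * (x ^ m * z) := by rw [← hz]
    _ = x ^ (m + n) * z := by rw [← mul_assoc, ← pow_add, add_comm n m]
    _ = x ^ m * z := by rw [hpow]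
    _ = x := hz.symm

variable (M) in
theorem exists_forall_pow_add_eq_pow [Finite M] :
    ∃ m n : ℕ, 0 < n ∧ ∀ x : M, x ^ (m + n) = x ^ m := by
  obtain ⟨m, l, hlt, heq⟩ := Set.finite_univ.exists_lt_map_eq_of_forall_mem
    (f := fun (k : ℕ) (x : M) => x ^ k) (fun _ => Set.mem_univ _)
  obtain ⟨n, hn, rfl⟩ := exists_pos_add_of_lt' hlt
  exact ⟨m, n, hn, fun x => (congrFun heq x).symm⟩

theorem stmt4_general {m n : ℕ} (hn : 0 < n) (hpow : ∀ x : M, x ^ (m + n) = x ^ m)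
    (hdvd : ∀ x : M, x * x ∣ x) : ∃ k : ℕ, 2 ≤ k ∧ ∀ x : M, x ^ k = x :=
  ⟨n + 1, by lia, fun x => pow_succ_eq_self_of_mul_self_dvd_self (hdvd x) (hpow x)⟩

end Monoid

theorem rIdeal_subset_rIdeal_iff_dvd {M : Type} [Monoid M] {x y : M} :
    rIdeal M x ⊆ rIdeal M y ↔ y ∣ x := by
  constructor
  · exact fun h => h ⟨1, (mul_one x).symm⟩
  · rintro h _ ⟨z, rfl⟩
    exact h.mul_right z

/-- Let `M` be a finite monoid such that for all `x,y ∈ M`, either `xM ⊆ (xy)M` or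
`yM ⊆ (xy)M`. Then there exists `k ≥ 2` such that `x^k = x` for all `x ∈ M`. -/
theorem stmt4 (M : Type) [Monoid M] [Fintype M]
    (hM : ∀ x y : M, rIdeal M x ⊆ rIdeal M (x * y) ∨ rIdeal M y ⊆ rIdeal M (x * y)) :
    ∃ k : ℕ, 2 ≤ k ∧ ∀ x : M, x ^ k = x := by
  obtain ⟨m, n, hn, hpow⟩ := exists_forall_pow_add_eq_pow M
  exact stmt4_general hn hpow fun x =>
    rIdeal_subset_rIdeal_iff_dvd.1 (or_self_iff.1 (hM x x))
end

section
/- Let M be a finite monoid and x,y ∈ M such that M(xy)M = MxM. Then xM ⊆ (xy)M. -/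
/-!
If `x ∈ M(xy)M`, write `x = u * x * w` with `w = y * v`. Iterating gives `x = u ^ n * x * w ^ n`
for every `n`. When the powers of `w` repeat, some `w ^ n` equals `w ^ (n + 1) * c`, and
substituting this into the `n`-th identity absorbs `u ^ n` again, leaving `x = x * w * c`.
-/

section Monoid

variable {M : Type*} [Monoid M]

/-- Right π-regularity of an element `a`: the descending chain of right ideals
`M ⊇ aM ⊇ a²M ⊇ ⋯` is stationary. This is the form in which finiteness of a monoid enters
the argument. In a noncommutative monoid `a ∣ b` means `b ∈ aM`, so the condition reads
`aⁿ ∈ aⁿ⁺¹M`. -/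
def IsRightPiRegular (a : M) : Prop := ∃ n : ℕ, a ^ (n + 1) ∣ a ^ n

theorem isRightPiRegular_of_finite [Finite M] (a : M) : IsRightPiRegular a := by
  obtain ⟨m, n, hmn, hpow⟩ := Set.finite_univ.exists_lt_map_eq_of_forall_mem
    (f := fun k : ℕ => a ^ k) fun _ => Set.mem_univ _
  have hdvd : a ^ (m + 1) ∣ a ^ n := pow_dvd_pow a hmn
  exact ⟨m, hdvd.trans hpow.symm.dvd⟩

theorem pow_mul_mul_pow_eq_of_mul_mul_eq {u x w : M} (h : u * x * w = x) (n : ℕ) :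
    u ^ n * x * w ^ n = x := by
  induction n with
  | zero => simp
  | succ n ih =>
    calc u ^ (n + 1) * x * w ^ (n + 1)
        = u ^ n * (u * x * w) * w ^ n := by simp only [pow_succ u, pow_succ' w, mul_assoc]
      _ = x := by rw [h, ih]

theorem IsRightPiRegular.mul_dvd_of_mul_mul_eq {u x w : M} (hw : IsRightPiRegular w)
    (h : u * x * w = x) : x * w ∣ x := by
  obtain ⟨n, c, hc⟩ := hw
  have hn : u ^ n * x * w ^ n = x := pow_mul_mul_pow_eq_of_mul_mul_eq h n
  refine ⟨c, ?_⟩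
  calc x = u ^ n * x * (w ^ (n + 1) * c) := by rw [← hc, hn]
    _ = u ^ n * x * w ^ n * w * c := by simp only [pow_succ, mul_assoc]
    _ = x * w * c := by rw [hn]

end Monoid

section Ideals

variable {M : Type} [Monoid M]

theorem self_mem_bIdeal (m : M) : m ∈ bIdeal M m := ⟨1, 1, by simp⟩

theorem rIdeal_subset_rIdeal_of_dvd {a b : M} (h : a ∣ b) : rIdeal M b ⊆ rIdeal M a :=
  fun _ hz => h.trans hz

theorem mul_dvd_of_mem_bIdeal_mul (hM : ∀ a : M, IsRightPiRegular a) {x y : M}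
    (h : x ∈ bIdeal M (x * y)) : x * y ∣ x := by
  obtain ⟨u, v, huv⟩ := h
  have hfix : u * x * (y * v) = x := by simpa only [mul_assoc] using huv.symm
  have hdvd : x * (y * v) ∣ x := (hM (y * v)).mul_dvd_of_mul_mul_eq hfix
  exact (mul_dvd_mul_left x (dvd_mul_right y v)).trans hdvd

end Ideals

theorem stmt6_general (M : Type) [Monoid M] (hM : ∀ a : M, IsRightPiRegular a) (x y : M)
    (h : bIdeal M x ⊆ bIdeal M (x * y)) : rIdeal M x ⊆ rIdeal M (x * y) :=
  rIdeal_subset_rIdeal_of_dvd (mul_dvd_of_mem_bIdeal_mul hM (h (self_mem_bIdeal x)))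

/-- Let `M` be a finite monoid and `x,y ∈ M` such that `M(xy)M = MxM`.
Then `xM ⊆ (xy)M`. -/
theorem stmt6 (M : Type) [Monoid M] [Fintype M] (x y : M)
    (h : bIdeal M (x * y) = bIdeal M x) :
    rIdeal M x ⊆ rIdeal M (x * y) :=
  stmt6_general M isRightPiRegular_of_finite x y h.ge
end

section
/- Let m ≥ 1 and let S be the semigroup on {1,…,m} × {1,…,m} with multiplication (a,b)·(c,d) = (min(a,c), d). Let M be the monoid obtained from S by adjoining an identity element. Then M is totally ordered, i.e., for all x,y ∈ M, M(xy)M = MxM or M(xy)M = MyM. -/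
/-- The semigroup on `{1,…,m} × {1,…,m}` with multiplication `(a,b)·(c,d) = (min(a,c), d)`. -/
def S (m : ℕ) : Type := Fin m × Fin m

instance (m : ℕ) : Mul (S m) := ⟨fun p q => (min p.1 q.1, q.2)⟩

instance (m : ℕ) : Semigroup (S m) where
  mul_assoc p q r := by
    show ((min (min p.1 q.1) r.1, r.2) : S m) = ((min p.1 (min q.1 r.1), r.2) : S m)
    rw [min_assoc]

/-! The first coordinate maps `S` onto a chain with operation `min`, and its fibres are right zero
semigroups: `q * p = p` whenever `p` and `q` have the same first coordinate. Hence the bilateral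
ideal of `p` depends only on the first coordinate, and that of `x * y` is the one of `x` or `y`. -/

theorem bIdeal_mul_subset_left_s9 {M : Type} [Monoid M] (a b : M) :
    bIdeal M (a * b) ⊆ bIdeal M a := by
  rintro _ ⟨x, y, rfl⟩
  exact ⟨x, b * y, by simp only [mul_assoc]⟩

theorem bIdeal_subset_of_mul_eq_right {M : Type} [Monoid M] {a b : M} (h : a * b = b) :
    bIdeal M b ⊆ bIdeal M a :=
  h ▸ bIdeal_mul_subset_left_s9 a b

theorem bIdeal_eq_of_mul_eq_right {M : Type} [Monoid M] {a b : M} (hab : a * b = b)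
    (hba : b * a = a) : bIdeal M a = bIdeal M b :=
  (bIdeal_subset_of_mul_eq_right hba).antisymm (bIdeal_subset_of_mul_eq_right hab)

theorem S.mul_eq_right_of_fst_eq {m : ℕ} (p q : S m) (h : p.1 = q.1) : q * p = p :=
  Prod.ext (min_eq_right h.le) rfl

theorem stmt9_general {T : Type} {α : Type*} [Semigroup T] [LinearOrder α] (f : T → α)
    (hmul : ∀ p q, f (p * q) = min (f p) (f q)) (hfibre : ∀ p q, f p = f q → q * p = p)
    (x y : WithOne T) :
    bIdeal (WithOne T) (x * y) = bIdeal (WithOne T) x ∨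
    bIdeal (WithOne T) (x * y) = bIdeal (WithOne T) y := by
  have bIdeal_eq_of_map_eq {p q : T} (h : f p = f q) :
      bIdeal (WithOne T) p = bIdeal (WithOne T) q :=
    bIdeal_eq_of_mul_eq_right (congrArg WithOne.coe (hfibre q p h.symm))
      (congrArg WithOne.coe (hfibre p q h))
  induction x using WithOne.recOneCoe with
  | one => exact .inr (by rw [one_mul])
  | coe p =>
    induction y using WithOne.recOneCoe with
    | one => exact .inl (by rw [mul_one])
    | coe q =>
      rw [← WithOne.coe_mul]
      exact (min_choice (f p) (f q)).imp
        (fun hmin => bIdeal_eq_of_map_eq ((hmul p q).trans hmin))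
        (fun hmin => bIdeal_eq_of_map_eq ((hmul p q).trans hmin))

/-- Let `m ≥ 1`, `S` the semigroup on `{1,…,m} × {1,…,m}` with
`(a,b)·(c,d) = (min(a,c), d)`, and `M` the monoid obtained from `S` by adjoining an
identity element. Then `M` is totally ordered: for all `x,y ∈ M`,
`M(xy)M = MxM` or `M(xy)M = MyM`. -/
theorem stmt9 (m : ℕ) (hm : 1 ≤ m) (x y : WithOne (S m)) :
    bIdeal (WithOne (S m)) (x * y) = bIdeal (WithOne (S m)) x ∨
    bIdeal (WithOne (S m)) (x * y) = bIdeal (WithOne (S m)) y :=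
  stmt9_general (fun p : S m => p.1) (fun _ _ => rfl) S.mul_eq_right_of_fst_eq x y
end

section
/- Let (Q,≤) be a well-quasi-ordered set of vertex labels and let (L,≤) be a finite totally ordered set of edge labels. Then the collection of finite rooted trees with vertices labelled in Q and edges labelled in L, quasi-ordered by the gap embedding relation, is well-quasi-ordered: every infinite sequence of such trees contains a pair T_i, T_j with i < j and a gap embedding from T_i to T_j. -/
/-- A finite rooted tree with vertex labels in `Q` and edge labels in `L`.
Vertices are `Fin n`; each vertex has a parent (the root is its own parent) and every
vertex reaches the root by iterating `parent`. `elbl v` is the label of the edge from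
`v` to its parent (meaningless at the root). -/
structure RTree (Q L : Type) where
  n : ℕ
  npos : 0 < n
  root : Fin n
  parent : Fin n → Fin n
  parent_root : parent root = root
  reach : ∀ v, ∃ k, parent^[k] v = root
  vlbl : Fin n → Q
  elbl : Fin n → L

/-- `y` is an ancestor of `x` (reflexively). -/
def RTree.anc {Q L : Type} (T : RTree Q L) (x y : Fin T.n) : Prop :=
  ∃ k, T.parent^[k] x = y

/-- A gap embedding from `T` to `T'`: an injective map on vertices respecting the
ancestor relation, with `leQ`-increasing vertex labels, and such that for every edge
from `x` to its parent, all edge labels on the corresponding path in `T'` are `leL`-above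
the label of the edge, the lowest one being exactly equal to it. -/
def GapEmbed {Q L : Type} (leQ : Q → Q → Prop) (leL : L → L → Prop)
    (T T' : RTree Q L) : Prop :=
  ∃ h : Fin T.n → Fin T'.n, Function.Injective h ∧
    (∀ x y, T'.anc (h x) (h y) ↔ T.anc x y) ∧
    (∀ x, leQ (T.vlbl x) (T'.vlbl (h x))) ∧
    (∀ x, x ≠ T.root →
      ∃ K, 0 < K ∧ T'.parent^[K] (h x) = h (T.parent x) ∧
        (∀ k, 0 < k → k < K → T'.parent^[k] (h x) ≠ h (T.parent x)) ∧
        (∀ k < K, leL (T.elbl x) (T'.elbl (T'.parent^[k] (h x)))) ∧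
        T'.elbl (h x) = T.elbl x)

/-!
Each vertex tops a branch, formed by its descendants and the edge to its parent. Compare branches
by gap embeddings that also respect the edge on top. Take the labels one at a time,
the smallest label `a` first: a path to a vertex whose edge is labelled `a` never meets a smaller
label, so a branch topped by `a` embeds into every branch containing it. Hence the minimal bad
sequence argument of Nash-Williams applies to the branches topped by `a`. Cutting at the `a`-edges,
first below the tops of a minimal bad sequence and then everywhere, leaves trees whose labels are
greater than `a` and whose atoms, the branches cut off, are well-quasi-ordered.
-/

open Set.PartiallyWellOrderedOn in
theorem partiallyWellOrderedOn_below_of_isMinBadSeq {α : Type*} {r : α → α → Prop} [IsTrans α r]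
    {rk : α → ℕ} {M : Set α} {f : ℕ → α} (hf : IsBadSeq r M f)
    (hmin : ∀ n, IsMinBadSeq r rk M n f) :
    {x ∈ M | ∃ n, r x (f n) ∧ rk x < rk (f n)}.PartiallyWellOrderedOn r := by
  rw [iff_forall_not_isBadSeq]
  rintro g ⟨hgM, hg⟩
  choose p hgp hrk using fun n => (hgM n).2
  -- At the least index in the range of `p`, switching from `f` to `g` keeps the sequence bad.
  let m := Function.argmin p
  have hm : ∀ n, p m ≤ p n := fun n => Function.argmin_le p n
  let spliced : ℕ → α := fun j => if j < p m then f j else g (m + (j - p m))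
  refine hmin (p m) spliced (fun j hj => (if_pos hj).symm) ?_ ⟨fun j => ?_, fun i j hij => ?_⟩
  · simpa [spliced] using hrk m
  · by_cases hj : j < p m
    · simpa only [spliced, if_pos hj] using hf.1 j
    · simpa only [spliced, if_neg hj] using (hgM _).1
  · by_cases hj : j < p m
    · simpa only [spliced, if_pos hj, if_pos (hij.trans hj)] using hf.2 i j hij
    by_cases hi : i < p m
    · simp only [spliced, if_neg hj, if_pos hi]
      exact fun h => hf.2 i _ (hi.trans_le (hm _)) (_root_.trans h (hgp _))
    · simp only [spliced, if_neg hj, if_neg hi]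
      exact hg _ _ (by omega)

section Sublists

variable {α β : Type*} {R : α → β → Prop}

theorem exists_orderEmbedding_of_sublistForall₂ {l : List α} {l' : List β}
    (h : List.SublistForall₂ R l l') :
    ∃ f : Fin l.length ↪o Fin l'.length, ∀ i, R (l.get i) (l'.get (f i)) := by
  obtain ⟨k, hlk, hkl'⟩ := List.sublistForall₂_iff.1 h
  obtain ⟨hlen, hR⟩ := List.forall₂_iff_get.1 hlk
  obtain ⟨f, hf⟩ := List.sublist_iff_exists_fin_orderEmbedding_get_eq.1 hkl'
  refine ⟨(Fin.castOrderIso hlen).toOrderEmbedding.trans f, fun i => ?_⟩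
  have := hR i i.2 (hlen ▸ i.2)
  exact hf (Fin.cast hlen i) ▸ this

theorem exists_embedding_of_sublistForall₂_toList {s : Finset α} {t : Finset β}
    (h : List.SublistForall₂ R s.toList t.toList) : ∃ f : s ↪ t, ∀ a : s, R a (f a) := by
  classical
  obtain ⟨f, hf⟩ := exists_orderEmbedding_of_sublistForall₂ h
  let index : s ≃ Fin s.toList.length :=
    (Equiv.subtypeEquivRight fun _ => Finset.mem_toList.symm).trans
      (s.nodup_toList.getEquiv _).symm
  let entry : Fin t.toList.length ≃ t :=
    (t.nodup_toList.getEquiv _).trans (Equiv.subtypeEquivRight fun _ => Finset.mem_toList)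
  refine ⟨(index.toEmbedding.trans f.toEmbedding).trans entry.toEmbedding, fun a => ?_⟩
  have := hf (index a)
  rwa [show s.toList.get (index a) = a from List.idxOf_get _] at this

end Sublists

namespace RTree

variable {Q L : Type} {T : RTree Q L} {v w w' x y z : Fin T.n}

section Ancestors

theorem iterate_parent_root (T : RTree Q L) (k : ℕ) : T.parent^[k] T.root = T.root :=
  Function.iterate_fixed T.parent_root k

theorem eq_root_of_iterate_parent_eq {k : ℕ} (hk : 0 < k) (hx : T.parent^[k] x = x) :
    x = T.root := by
  obtain ⟨m, hm⟩ := T.reach x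
  calc
    x = T.parent^[k * m] x := by rw [Function.iterate_mul, Function.iterate_fixed hx]
    _ = T.parent^[k * m - m] (T.parent^[m] x) := by
      rw [← Function.iterate_add_apply, Nat.sub_add_cancel (Nat.le_mul_of_pos_left m hk)]
    _ = T.root := by rw [hm, iterate_parent_root]

theorem anc_refl (T : RTree Q L) (x : Fin T.n) : T.anc x x := ⟨0, rfl⟩

theorem anc_parent (T : RTree Q L) (x : Fin T.n) : T.anc x (T.parent x) := ⟨1, rfl⟩

theorem anc_trans (hxy : T.anc x y) (hyz : T.anc y z) : T.anc x z := by
  obtain ⟨a, rfl⟩ := hxy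
  obtain ⟨b, rfl⟩ := hyz
  exact ⟨b + a, Function.iterate_add_apply ..⟩

theorem anc_antisymm (hxy : T.anc x y) (hyx : T.anc y x) : x = y := by
  obtain ⟨a, rfl⟩ := hxy
  obtain ⟨b, hb⟩ := hyx
  obtain rfl | ha := a.eq_zero_or_pos
  · rfl
  · rw [← Function.iterate_add_apply] at hb
    rw [eq_root_of_iterate_parent_eq (by omega) hb, iterate_parent_root]

theorem anc_total (hy : T.anc x y) (hz : T.anc x z) : T.anc y z ∨ T.anc z y := by
  obtain ⟨a, rfl⟩ := hy
  obtain ⟨b, rfl⟩ := hz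
  obtain hab | hba := le_total a b
  · exact .inl ⟨b - a, by rw [← Function.iterate_add_apply, Nat.sub_add_cancel hab]⟩
  · exact .inr ⟨a - b, by rw [← Function.iterate_add_apply, Nat.sub_add_cancel hba]⟩

theorem anc_parent_of_anc_of_ne (h : T.anc x y) (hne : x ≠ y) : T.anc (T.parent x) y := by
  obtain ⟨_ | k, hk⟩ := h
  · exact absurd hk hne
  · exact ⟨k, hk⟩

end Ancestors

section Children

/-- The children of `v`; the root, being its own parent, has to be excluded explicitly. -/
def children (T : RTree Q L) (v : Fin T.n) : Finset (Fin T.n) :=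
  {w | w ≠ T.root ∧ T.parent w = v}

theorem mem_children : w ∈ T.children v ↔ w ≠ T.root ∧ T.parent w = v := by
  simp [children]

theorem anc_of_mem_children (hw : w ∈ T.children v) : T.anc w v :=
  ⟨1, (mem_children.1 hw).2⟩

theorem not_anc_of_mem_children (hw : w ∈ T.children v) (hx : T.anc x w) : ¬T.anc v x := by
  intro hvx
  have hwv : w = v := anc_antisymm (anc_of_mem_children hw) (anc_trans hvx hx)
  obtain ⟨hroot, hparent⟩ := mem_children.1 hw
  exact hroot (eq_root_of_iterate_parent_eq one_pos (hparent.trans hwv.symm))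

theorem ne_of_mem_children (hw : w ∈ T.children v) (hx : T.anc x w) : x ≠ v := by
  rintro rfl
  exact not_anc_of_mem_children hw hx (T.anc_refl x)

theorem eq_of_anc_of_mem_children (hw : w ∈ T.children v) (hw' : w' ∈ T.children v)
    (hxw : T.anc x w) (hxw' : T.anc x w') : w = w' := by
  have eq_of_anc {u u'} (hu : u ∈ T.children v) (hu' : u' ∈ T.children v) (h : T.anc u u') :
      u = u' := by
    by_contra hne
    have hv := anc_parent_of_anc_of_ne h hne
    rw [(mem_children.1 hu).2] at hv
    exact not_anc_of_mem_children hu' (T.anc_refl u') hv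
  obtain h | h := anc_total hxw hxw'
  · exact eq_of_anc hw hw' h
  · exact (eq_of_anc hw' hw h).symm

theorem eq_or_exists_mem_children_of_anc (h : T.anc x v) :
    x = v ∨ ∃ w ∈ T.children v, T.anc x w := by
  obtain ⟨k, hk⟩ := h
  induction k generalizing x with
  | zero => exact .inl hk
  | succ k ih =>
    obtain hparent | ⟨w, hw, hxw⟩ := ih hk
    · by_cases hx : x = T.root
      · rw [hx, T.parent_root] at hparent
        exact .inl (hx.trans hparent)
      · exact .inr ⟨x, mem_children.2 ⟨hx, hparent⟩, T.anc_refl x⟩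
    · exact .inr ⟨w, hw, anc_trans (T.anc_parent x) hxw⟩

theorem exists_extend_children {β : Type*} (v : Fin T.n) (b : β)
    (g : T.children v → Fin T.n → β) :
    ∃ h : Fin T.n → β, h v = b ∧ ∀ (w : T.children v) x, T.anc x w → h x = g w x := by
  classical
  refine ⟨fun x => if hx : ∃ w : T.children v, T.anc x w then g hx.choose x else b,
    dif_neg fun ⟨w, hw⟩ => ne_of_mem_children w.2 hw rfl, fun w x hxw => ?_⟩
  have hx : ∃ w : T.children v, T.anc x w := ⟨w, hxw⟩
  have hw : hx.choose = w :=
    Subtype.ext (eq_of_anc_of_mem_children hx.choose.2 w.2 hx.choose_spec hxw)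
  simp only [dif_pos hx, hw]

end Children

section Paths

variable [LE L] {l : L}

/-- `y` is an ancestor of `x`, and all edges on the path from `x` up to `y` have labels at
least `l`. -/
def PathAbove (T : RTree Q L) (l : L) (x y : Fin T.n) : Prop :=
  ∃ K, T.parent^[K] x = y ∧ ∀ k < K, l ≤ T.elbl (T.parent^[k] x)

theorem PathAbove.refl (T : RTree Q L) (l : L) (x : Fin T.n) : T.PathAbove l x x :=
  ⟨0, rfl, fun _ hk => absurd hk (Nat.not_lt_zero _)⟩

theorem PathAbove.anc (h : T.PathAbove l x y) : T.anc x y :=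
  h.imp fun _ hK => hK.1

theorem PathAbove.parent (h : T.PathAbove l x y) (hy : l ≤ T.elbl y) :
    T.PathAbove l x (T.parent y) := by
  obtain ⟨K, rfl, hl⟩ := h
  refine ⟨K + 1, Function.iterate_succ_apply' .., fun k hk => ?_⟩
  obtain hlt | rfl := (Nat.le_of_lt_succ hk).lt_or_eq
  · exact hl k hlt
  · exact hy

theorem PathAbove.exists_first_visit (h : T.PathAbove l x y) (hne : x ≠ y) :
    ∃ K, 0 < K ∧ T.parent^[K] x = y ∧ (∀ k, 0 < k → k < K → T.parent^[k] x ≠ y) ∧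
      ∀ k < K, l ≤ T.elbl (T.parent^[k] x) := by
  classical
  obtain ⟨K, hK, hl⟩ := h
  have hex : ∃ K, T.parent^[K] x = y := ⟨K, hK⟩
  refine ⟨Nat.find hex, ?_, Nat.find_spec hex, fun k _ hk => Nat.find_min hex hk,
    fun k hk => hl k (hk.trans_le (Nat.find_min' hex hK))⟩
  exact (Nat.find_pos hex).2 hne

end Paths

end RTree

/-- The branch of `tree` at the vertex `top`: the descendants of `top` together with the edge
from `top` to its parent. At the root that edge does not exist, and the arbitrary label `elbl`
gives it takes part in the comparison of branches. -/
structure Branch (Q L : Type) where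
  tree : RTree Q L
  top : Fin tree.n

namespace Branch

variable {Q L : Type}

section Size

/-- The vertices of a branch. -/
def verts (P : Branch Q L) : Set (Fin P.tree.n) := {x | P.tree.anc x P.top}

/-- The number of vertices of a branch, the rank in the minimal bad sequence argument. -/
noncomputable def size (P : Branch Q L) : ℕ := P.verts.ncard

theorem top_mem_verts (P : Branch Q L) : P.top ∈ P.verts := P.tree.anc_refl P.top

theorem verts_child_subset {P : Branch Q L} {w : Fin P.tree.n}
    (hw : w ∈ P.tree.children P.top) : verts ⟨P.tree, w⟩ ⊆ P.verts :=
  fun _ hx => RTree.anc_trans hx (RTree.anc_of_mem_children hw)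

theorem size_child_lt {P : Branch Q L} {w : Fin P.tree.n} (hw : w ∈ P.tree.children P.top) :
    size ⟨P.tree, w⟩ < P.size :=
  Set.ncard_lt_ncard (Set.ssubset_iff_of_subset (verts_child_subset hw) |>.2
    ⟨P.top, P.top_mem_verts, fun h => RTree.ne_of_mem_children hw h rfl⟩)

@[elab_as_elim]
theorem induction_children {motive : Branch Q L → Prop}
    (node : ∀ P : Branch Q L, (∀ w ∈ P.tree.children P.top, motive ⟨P.tree, w⟩) → motive P)
    (P : Branch Q L) : motive P :=
  (measure size).wf.induction P fun P ih => node P fun _ hw => ih _ (size_child_lt hw)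

end Size

/-- The label of the edge above the top vertex. -/
def edge (P : Branch Q L) : L := P.tree.elbl P.top

section Generated

/-- The branches built from the atoms in `A` by adding top vertices whose edges have labels
in `S`. -/
inductive Generated (S : Set L) (A : Set (Branch Q L)) : Branch Q L → Prop
  | atom {P : Branch Q L} (hP : P ∈ A) : Generated S A P
  | node {P : Branch Q L} (hedge : P.edge ∈ S)
      (hchild : ∀ w ∈ P.tree.children P.top, Generated S A ⟨P.tree, w⟩) : Generated S A P

theorem generated_univ (A : Set (Branch Q L)) (P : Branch Q L) : Generated Set.univ A P := by
  induction P using induction_children with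
  | node P ih => exact .node trivial ih

theorem generated_empty_subset (A : Set (Branch Q L)) : {P | Generated ∅ A P} ⊆ A := by
  rintro P (hP | ⟨hedge, -⟩)
  · exact hP
  · exact hedge.elim

end Generated

variable [Preorder L] {r : Q → Q → Prop}

/-- Gap embedding of branches, described recursively: the top of `P` goes to the top of `P'` and
the branches at its children go to branches at distinct children, or `P` goes into the branch at a
child of `P'`. In the latter case the top edge of `P'` lies on the path above the image of `P`. -/
inductive Embeds (r : Q → Q → Prop) : Branch Q L → Branch Q L → Prop
  | node {P P' : Branch Q L} (hedge : P.edge = P'.edge)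
      (htop : r (P.tree.vlbl P.top) (P'.tree.vlbl P'.top))
      (f : P.tree.children P.top ↪ P'.tree.children P'.top)
      (hf : ∀ w : P.tree.children P.top, Embeds r ⟨P.tree, w⟩ ⟨P'.tree, f w⟩) : Embeds r P P'
  | deeper {P P' : Branch Q L} (hedge : P.edge ≤ P'.edge) (w : P'.tree.children P'.top)
      (hw : Embeds r P ⟨P'.tree, w⟩) : Embeds r P P'

section Preorder

theorem Embeds.refl [Std.Refl r] (P : Branch Q L) : Embeds r P P := by
  induction P using induction_children with
  | node P ih => exact .node rfl (refl_of r _) (.refl _) fun w => ih w w.2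

theorem Embeds.edge_le {P P' : Branch Q L} (h : Embeds r P P') : P.edge ≤ P'.edge := by
  cases h with
  | node hedge => exact hedge.le
  | deeper hedge => exact hedge

theorem Embeds.trans [IsTrans Q r] {P P' P'' : Branch Q L} (h : Embeds r P P')
    (h' : Embeds r P' P'') : Embeds r P P'' := by
  induction h' generalizing P with
  | node hedge' htop' f' _ ih =>
    cases h with
    | node hedge htop f hf =>
      exact .node (hedge.trans hedge') (trans_of r htop htop') (f.trans f')
        fun w => ih (f w) (hf w)
    | deeper hedge w hw => exact .deeper (hedge.trans hedge'.le) (f' w) (ih w hw)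
  | deeper hedge' w _ ih => exact .deeper (h.edge_le.trans hedge') w (ih h)

instance [IsPreorder Q r] : IsPreorder (Branch Q L) (Embeds r) where
  refl := Embeds.refl
  trans _ _ _ := Embeds.trans

end Preorder

section WellQuasiOrder

variable {S : Set L} {A : Set (Branch Q L)} {a : L}

theorem Generated.of_insert [Std.Refl r] (ha : ∀ l ∈ S, a ≤ l) {B : Set (Branch Q L)}
    (hAB : A ⊆ B) {P : Branch Q L} (hP : Generated (insert a S) A P)
    (hB : ∀ s, Generated (insert a S) A s → s.edge = a → Embeds r s P → s.size ≤ P.size → s ∈ B) :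
    Generated S B P := by
  induction hP with
  | atom hP => exact .atom (hAB hP)
  | @node P hedge hchild ih =>
    obtain hPa | hPS := Set.eq_or_mem_of_mem_insert hedge
    · exact .atom (hB P (.node hedge hchild) hPa (.refl P) le_rfl)
    · refine .node hPS fun w hw => ih w hw fun s hs hsa hsw hsize => ?_
      exact hB s hs hsa (.deeper (hsa.trans_le (ha _ hPS)) ⟨w, hw⟩ hsw)
        (hsize.trans (size_child_lt hw).le)

variable [IsPreorder Q r]

theorem partiallyWellOrderedOn_edge_eq_and_children_mem (hr : WellQuasiOrdered r)
    (hA : A.PartiallyWellOrderedOn (Embeds r)) (a : L) :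
    {P : Branch Q L | P.edge = a ∧ ∀ w ∈ P.tree.children P.top, ⟨P.tree, w⟩ ∈ A}
      |>.PartiallyWellOrderedOn (Embeds r) := by
  rw [Set.partiallyWellOrderedOn_iff_exists_lt]
  intro f hf
  let childBranches (P : Branch Q L) : List (Branch Q L) :=
    (P.tree.children P.top).toList.map fun w => ⟨P.tree, w⟩
  have hchild : ∀ n, ∀ P ∈ childBranches (f n), P ∈ A := fun n P hP => by
    obtain ⟨w, hw, rfl⟩ := List.mem_map.1 hP
    exact (hf n).2 w (Finset.mem_toList.1 hw)
  have higman := hA.partiallyWellOrderedOn_sublistForall₂ (Embeds r)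
  obtain ⟨i, j, hij, htop, hsub⟩ :=
    ((Set.partiallyWellOrderedOn_univ_iff.2 hr).prod higman).exists_lt
      (f := fun n => ((f n).tree.vlbl (f n).top, childBranches (f n)))
      fun n => ⟨trivial, hchild n⟩
  rw [List.sublistForall₂_map_left_iff, List.sublistForall₂_map_right_iff] at hsub
  obtain ⟨e, he⟩ := exists_embedding_of_sublistForall₂_toList hsub
  exact ⟨i, j, hij, .node ((hf i).1.trans (hf j).1.symm) htop e he⟩

theorem partiallyWellOrderedOn_generated_insert_edge_eq (hr : WellQuasiOrdered r)
    (ha : ∀ l ∈ S, a ≤ l)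
    (hS : ∀ B : Set (Branch Q L), B.PartiallyWellOrderedOn (Embeds r) →
      {P | Generated S B P}.PartiallyWellOrderedOn (Embeds r))
    (hA : A.PartiallyWellOrderedOn (Embeds r)) :
    {P | Generated (insert a S) A P ∧ P.edge = a}.PartiallyWellOrderedOn (Embeds r) := by
  let M : Set (Branch Q L) := {P | (Generated (insert a S) A P ∧ P.edge = a) ∧ P ∉ A}
  suffices hM : M.PartiallyWellOrderedOn (Embeds r) from
    (hA.union hM).mono fun P hP => (em (P ∈ A)).imp_right fun hPA => ⟨hP, hPA⟩
  rw [Set.PartiallyWellOrderedOn.iff_not_exists_isMinBadSeq size]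
  rintro ⟨f, hf, hmin⟩
  let B := A ∪ {s ∈ M | ∃ n, Embeds r s (f n) ∧ s.size < (f n).size}
  have hB : B.PartiallyWellOrderedOn (Embeds r) :=
    hA.union (partiallyWellOrderedOn_below_of_isMinBadSeq hf hmin)
  have hchild : ∀ n, ∀ w ∈ (f n).tree.children (f n).top, Generated S B ⟨(f n).tree, w⟩ := by
    intro n w hw
    obtain ⟨⟨hgen, hedge⟩, hfA⟩ := hf.1 n
    have hgenw : Generated (insert a S) A ⟨(f n).tree, w⟩ := by
      cases hgen with
      | atom h => exact absurd h hfA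
      | node _ h => exact h w hw
    refine hgenw.of_insert (r := r) ha Set.subset_union_left fun s hs hsa hsw hsize => ?_
    have hsf : Embeds r s (f n) := .deeper (hsa.trans hedge.symm).le ⟨w, hw⟩ hsw
    exact (em (s ∈ A)).imp_right fun hsA =>
      ⟨⟨⟨hs, hsa⟩, hsA⟩, n, hsf, hsize.trans_lt (size_child_lt hw)⟩
  obtain ⟨i, j, hij, hE⟩ :=
    (partiallyWellOrderedOn_edge_eq_and_children_mem hr (hS B hB) a).exists_lt
      fun n => ⟨(hf.1 n).1.2, hchild n⟩
  exact hf.2 i j hij hE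

theorem partiallyWellOrderedOn_generated {L : Type} [LinearOrder L] (hr : WellQuasiOrdered r)
    (S : Finset L) {A : Set (Branch Q L)} (hA : A.PartiallyWellOrderedOn (Embeds r)) :
    {P | Generated S A P}.PartiallyWellOrderedOn (Embeds r) := by
  induction S using Finset.induction_on_min generalizing A with
  | empty => exact hA.mono (by simpa using generated_empty_subset A)
  | insert a S ha ih =>
    have ha : ∀ l ∈ (S : Set L), a ≤ l := fun l hl => (ha l hl).le
    rw [Finset.coe_insert]
    refine (ih (hA.union (partiallyWellOrderedOn_generated_insert_edge_eq hr ha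
      (fun B hB => ih hB) hA))).mono fun P hP => ?_
    exact hP.of_insert (r := r) ha Set.subset_union_left fun s hs hsa _ _ => .inr ⟨hs, hsa⟩

theorem wellQuasiOrdered_embeds {L : Type} [LinearOrder L] [Finite L] (hr : WellQuasiOrdered r) :
    WellQuasiOrdered (Embeds r (L := L)) := fun f => by
  have := Fintype.ofFinite L
  refine (partiallyWellOrderedOn_generated hr Finset.univ
    (Set.partiallyWellOrderedOn_empty _)).exists_lt fun n => ?_
  simpa only [Finset.coe_univ, Set.mem_ofPred_eq] using generated_univ ∅ (f n)

end WellQuasiOrder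

section GapEmbedding

variable {P P' : Branch Q L} {g h : Fin P.tree.n → Fin P'.tree.n}

/-- `h` is a gap embedding of the branch `P` into the branch `P'`, where the top edge of `P` is
embedded as well: it goes to the path leading from the image of the top of `P` out of `P'`. Nothing
is asked of `h` outside `P`. -/
structure IsGapEmbedding (r : Q → Q → Prop) (P P' : Branch Q L)
    (h : Fin P.tree.n → Fin P'.tree.n) : Prop where
  anc_iff : ∀ x ∈ P.verts, ∀ y ∈ P.verts, P'.tree.anc (h x) (h y) ↔ P.tree.anc x y
  vlbl : ∀ x ∈ P.verts, r (P.tree.vlbl x) (P'.tree.vlbl (h x))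
  elbl : ∀ x ∈ P.verts, P'.tree.elbl (h x) = P.tree.elbl x
  path : ∀ x ∈ P.verts, x ≠ P.top →
    P'.tree.PathAbove (P.tree.elbl x) (h x) (h (P.tree.parent x))
  path_top : P'.tree.PathAbove P.edge (h P.top) P'.top
  edge_le : P.edge ≤ P'.edge

theorem IsGapEmbedding.congr (hg : IsGapEmbedding r P P' g) (hgh : ∀ x ∈ P.verts, h x = g x) :
    IsGapEmbedding r P P' h where
  anc_iff x hx y hy := by
    rw [hgh x hx, hgh y hy]
    exact hg.anc_iff x hx y hy
  vlbl x hx := hgh x hx ▸ hg.vlbl x hx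
  elbl x hx := hgh x hx ▸ hg.elbl x hx
  path x hx hne := by
    rw [hgh x hx, hgh _ (RTree.anc_parent_of_anc_of_ne hx hne)]
    exact hg.path x hx hne
  path_top := hgh _ P.top_mem_verts ▸ hg.path_top
  edge_le := hg.edge_le

theorem IsGapEmbedding.mem_verts (hh : IsGapEmbedding r P P' h) {x : Fin P.tree.n}
    (hx : x ∈ P.verts) : h x ∈ P'.verts :=
  RTree.anc_trans ((hh.anc_iff x hx _ P.top_mem_verts).2 hx) hh.path_top.anc

theorem IsGapEmbedding.injOn (hh : IsGapEmbedding r P P' h) : Set.InjOn h P.verts := by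
  intro x hx y hy hxy
  refine RTree.anc_antisymm ((hh.anc_iff x hx y hy).1 ?_) ((hh.anc_iff y hy x hx).1 ?_) <;>
    exact hxy ▸ RTree.anc_refl _ _

theorem IsGapEmbedding.deeper {w : Fin P'.tree.n} (hw : w ∈ P'.tree.children P'.top)
    (hedge : P.edge ≤ P'.edge) (hh : IsGapEmbedding r P ⟨P'.tree, w⟩ h) :
    IsGapEmbedding r P P' h :=
  { hh with
    path_top := (RTree.mem_children.1 hw).2 ▸ hh.path_top.parent hh.edge_le
    edge_le := hedge }

variable {f : P.tree.children P.top ↪ P'.tree.children P'.top}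

theorem anc_iff_of_isGapEmbedding_children (htop : h P.top = P'.top)
    (hf : ∀ w : P.tree.children P.top, IsGapEmbedding r ⟨P.tree, w⟩ ⟨P'.tree, f w⟩ h)
    {x y : Fin P.tree.n} (hx : x ∈ P.verts) (hy : y ∈ P.verts) :
    P'.tree.anc (h x) (h y) ↔ P.tree.anc x y := by
  obtain rfl | ⟨w, hw, hxw⟩ := RTree.eq_or_exists_mem_children_of_anc hx <;>
    obtain rfl | ⟨w', hw', hyw'⟩ := RTree.eq_or_exists_mem_children_of_anc hy
  · exact iff_of_true (RTree.anc_refl _ _) (RTree.anc_refl _ _)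
  · refine iff_of_false (htop ▸ ?_) (RTree.not_anc_of_mem_children hw' hyw')
    exact RTree.not_anc_of_mem_children (f ⟨w', hw'⟩).2 ((hf ⟨w', hw'⟩).mem_verts hyw')
  · refine iff_of_true (htop ▸ ?_) hx
    exact verts_child_subset (f ⟨w, hw⟩).2 ((hf ⟨w, hw⟩).mem_verts hxw)
  · by_cases hww' : w = w'
    · subst hww'
      exact (hf ⟨w, hw⟩).anc_iff x hxw y hyw'
    · refine iff_of_false (fun hxy => hww' ?_) (fun hxy => hww' ?_)
      · have hfw : f ⟨w, hw⟩ = f ⟨w', hw'⟩ := Subtype.ext <|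
          RTree.eq_of_anc_of_mem_children (f _).2 (f _).2 ((hf ⟨w, hw⟩).mem_verts hxw)
            (RTree.anc_trans hxy ((hf ⟨w', hw'⟩).mem_verts hyw'))
        exact congrArg Subtype.val (f.injective hfw)
      · exact RTree.eq_of_anc_of_mem_children hw hw' hxw (RTree.anc_trans hxy hyw')

theorem isGapEmbedding_of_children (hedge : P.edge = P'.edge)
    (hr : r (P.tree.vlbl P.top) (P'.tree.vlbl P'.top)) (htop : h P.top = P'.top)
    (hf : ∀ w : P.tree.children P.top, IsGapEmbedding r ⟨P.tree, w⟩ ⟨P'.tree, f w⟩ h) :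
    IsGapEmbedding r P P' h where
  anc_iff _ hx _ hy := anc_iff_of_isGapEmbedding_children htop hf hx hy
  vlbl x hx := by
    obtain rfl | ⟨w, hw, hxw⟩ := RTree.eq_or_exists_mem_children_of_anc hx
    · rwa [htop]
    · exact (hf ⟨w, hw⟩).vlbl x hxw
  elbl x hx := by
    obtain rfl | ⟨w, hw, hxw⟩ := RTree.eq_or_exists_mem_children_of_anc hx
    · rw [htop]
      exact hedge.symm
    · exact (hf ⟨w, hw⟩).elbl x hxw
  path x hx hne := by
    obtain rfl | ⟨w, hw, hxw⟩ := RTree.eq_or_exists_mem_children_of_anc hx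
    · exact absurd rfl hne
    by_cases hxw' : x = w
    · subst hxw'
      have hpath := (hf ⟨x, hw⟩).path_top.parent (hf ⟨x, hw⟩).edge_le
      rw [(RTree.mem_children.1 (f ⟨x, hw⟩).2).2] at hpath
      rwa [(RTree.mem_children.1 hw).2, htop]
    · exact (hf ⟨w, hw⟩).path x hxw hxw'
  path_top := htop ▸ RTree.PathAbove.refl ..
  edge_le := hedge.le

theorem Embeds.exists_isGapEmbedding (hPP' : Embeds r P P') : ∃ h, IsGapEmbedding r P P' h := by
  induction hPP' with
  | deeper hedge w _ ih =>
    obtain ⟨h, hh⟩ := ih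
    exact ⟨h, hh.deeper w.2 hedge⟩
  | @node P P' hedge htop f _ ih =>
    choose g hg using ih
    obtain ⟨h, hhtop, hhg⟩ := RTree.exists_extend_children P.top P'.top g
    exact ⟨h, isGapEmbedding_of_children hedge htop hhtop fun w => (hg w).congr (hhg w)⟩

theorem Embeds.gapEmbed {T T' : RTree Q L} (hTT' : Embeds r ⟨T, T.root⟩ ⟨T', T'.root⟩) :
    GapEmbed r (· ≤ ·) T T' := by
  obtain ⟨h, hh⟩ := hTT'.exists_isGapEmbedding
  have hmem : ∀ x, x ∈ verts ⟨T, T.root⟩ := T.reach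
  have hinj : Function.Injective h := fun x y hxy => hh.injOn (hmem x) (hmem y) hxy
  refine ⟨h, hinj, fun x y => hh.anc_iff x (hmem x) y (hmem y), fun x => hh.vlbl x (hmem x),
    fun x hx => ?_⟩
  have hne : h x ≠ h (T.parent x) := fun hxp =>
    hx (RTree.eq_root_of_iterate_parent_eq one_pos (hinj hxp).symm)
  obtain ⟨K, hK, hpath, hfirst, hlabels⟩ := (hh.path x (hmem x) hx).exists_first_visit hne
  exact ⟨K, hK, hpath, hfirst, hlabels, hh.elbl x (hmem x)⟩

end GapEmbedding

end Branch

/-- Dershowitz–Tzameret: for a well-quasi-ordered set `(Q, leQ)` of vertex labels and a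
finite totally ordered set `L` of edge labels, finite rooted labelled trees are
well-quasi-ordered by the gap embedding relation. -/
theorem stmt10 (Q L : Type) (leQ : Q → Q → Prop)
    (hrefl : ∀ q, leQ q q)
    (htrans : ∀ a b c, leQ a b → leQ b c → leQ a c)
    (hwqo : ∀ f : ℕ → Q, ∃ i j, i < j ∧ leQ (f i) (f j))
    [LinearOrder L] [Fintype L]
    (T : ℕ → RTree Q L) :
    ∃ i j, i < j ∧ GapEmbed leQ (· ≤ ·) (T i) (T j) := by
  have : IsPreorder Q leQ := { refl := hrefl, trans := htrans }
  obtain ⟨i, j, hij, hE⟩ :=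
    Branch.wellQuasiOrdered_embeds hwqo fun n => (⟨T n, (T n).root⟩ : Branch Q L)
  exact ⟨i, j, hij, hE.gapEmbed⟩
end
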